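/- arXiv:1606.05458 — 5 statements merged into one kernel-verified Lean document; each statement's English description precedes it below -/
import Mathlib

section
/- Let P and Q be two probability measures on the path space C([0,T], ℝ^N) with canonical process X. If for every bounded function f : [0,T]×ℝ^N → ℝ that is continuous in the time variable and Lipschitz in the space variable one has E_P[∫_0^T f(s, X_s) ds] = E_Q[∫_0^T f(s, X_s) ds], then for every t ∈ [0,T] the law of X_t under P equals the law of X_t under Q (the one-dimensional marginals of P and Q coincide). -/
/-!
Statement 1: if two probability measures on path space give the same expectation to
`∫_0^T f(s, X_s) ds` for every bounded, time-continuous, space-Lipschitz `f`, then their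
one-dimensional marginals coincide.
-/

open MeasureTheory Set

noncomputable section

namespace Stmt1

/-- Borel σ-algebra on the path space `C([0,T], ℝ^N)`. -/
instance pathMeasurableSpace {α β : Type*} [TopologicalSpace α] [TopologicalSpace β] :
    MeasurableSpace C(α, β) := borel _

instance pathBorelSpace {α β : Type*} [TopologicalSpace α] [TopologicalSpace β] :
    BorelSpace C(α, β) := ⟨rfl⟩


/-- Joint continuity of the evaluation of a continuous function along the path. -/
lemma continuous_eval_path {N : ℕ} {T : ℝ} (hT : 0 < T)
    {g : EuclideanSpace ℝ (Fin N) → ℝ} (hg : Continuous g) :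
    Continuous fun p : ℝ × C(Icc (0:ℝ) T, EuclideanSpace ℝ (Fin N)) =>
      g (p.2 (projIcc 0 T hT.le p.1)) :=
  hg.comp (continuous_snd.eval (continuous_projIcc.comp continuous_fst))

lemma continuous_mean {N : ℕ} {T : ℝ} (hT : 0 < T)
    (P : Measure C(Icc (0:ℝ) T, EuclideanSpace ℝ (Fin N))) [IsProbabilityMeasure P]
    {g : EuclideanSpace ℝ (Fin N) → ℝ} (hg : Continuous g) (M : ℝ) (hM : ∀ x, |g x| ≤ M) :
    Continuous fun s : ℝ => ∫ ω, g (ω (projIcc 0 T hT.le s)) ∂P := by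
  refine continuous_of_dominated (bound := fun _ => M) ?_ ?_ (integrable_const _) ?_
  · intro s
    exact ((continuous_eval_path hT hg).comp (Continuous.prodMk_right s)).aestronglyMeasurable
  · exact fun s => ae_of_all _ fun ω => hM _
  · exact ae_of_all _ fun ω => (continuous_eval_path hT hg).comp (Continuous.prodMk_left ω)

lemma abs_mean_le {N : ℕ} {T : ℝ} (hT : 0 < T)
    (P : Measure C(Icc (0:ℝ) T, EuclideanSpace ℝ (Fin N))) [IsProbabilityMeasure P]
    {g : EuclideanSpace ℝ (Fin N) → ℝ} (M : ℝ) (hM : ∀ x, |g x| ≤ M) (s : ℝ) :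
    |∫ ω, g (ω (projIcc 0 T hT.le s)) ∂P| ≤ M := by
  have := norm_integral_le_of_norm_le_const (μ := P)
    (f := fun ω => g (ω (projIcc 0 T hT.le s))) (C := M) (ae_of_all _ fun ω => hM _)
  simpa using this

lemma swap_mean {N : ℕ} {T : ℝ} (hT : 0 < T)
    (P : Measure C(Icc (0:ℝ) T, EuclideanSpace ℝ (Fin N))) [IsProbabilityMeasure P]
    {g : EuclideanSpace ℝ (Fin N) → ℝ} (hg : Continuous g) (M : ℝ) (hM : ∀ x, |g x| ≤ M)
    {φ : ℝ → ℝ} (hφ : Continuous φ) (B : ℝ) (hB : ∀ s, |φ s| ≤ B) :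
    ∫ ω, (∫ s in (0:ℝ)..T, φ s * g (ω (projIcc 0 T hT.le s))) ∂P =
      ∫ s in (0:ℝ)..T, φ s * ∫ ω, g (ω (projIcc 0 T hT.le s)) ∂P := by
  rw [← intervalIntegral_integral_swap]
  · simp_rw [integral_const_mul]
  · have : IsFiniteMeasure ((volume : Measure ℝ).restrict (uIoc 0 T)) := by
      refine ⟨?_⟩
      simp [uIoc]
    refine Integrable.of_bound (C := B * M) ?_ ?_
    · exact ((hφ.comp continuous_fst).mul (continuous_eval_path hT hg)).aestronglyMeasurable
    · refine ae_of_all _ fun p => ?_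
      simp only [Function.uncurry, norm_mul, Real.norm_eq_abs]
      exact mul_le_mul (hB _) (hM _) (abs_nonneg _) ((abs_nonneg _).trans (hB 0))

theorem marginals_eq
    (N : ℕ) (hN : 0 < N) (T : ℝ) (hT : 0 < T)
    (P Q : Measure C(Icc (0:ℝ) T, EuclideanSpace ℝ (Fin N)))
    (hP : IsProbabilityMeasure P) (hQ : IsProbabilityMeasure Q)
    (h : ∀ f : ℝ → EuclideanSpace ℝ (Fin N) → ℝ,
      (∃ M : ℝ, ∀ s x, |f s x| ≤ M) →
      (∀ x, Continuous fun s => f s x) →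
      (∃ K : NNReal, ∀ s, LipschitzWith K (f s)) →
      ∫ ω, (∫ s in (0:ℝ)..T, f s (ω (projIcc 0 T hT.le s))) ∂P =
        ∫ ω, (∫ s in (0:ℝ)..T, f s (ω (projIcc 0 T hT.le s))) ∂Q) :
    ∀ t : Icc (0:ℝ) T,
      P.map (fun ω => ω t) = Q.map (fun ω => ω t) := by
  have key : ∀ (g : EuclideanSpace ℝ (Fin N) → ℝ) (K : NNReal), LipschitzWith K g →
      (∃ M : ℝ, ∀ x, |g x| ≤ M) → ∀ t : Icc (0:ℝ) T,
      ∫ ω, g (ω t) ∂P = ∫ ω, g (ω t) ∂Q := by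
    rintro g K hgK ⟨M, hM⟩ t
    have hg := hgK.continuous
    have hM0 : 0 ≤ M := (abs_nonneg _).trans (hM 0)
    set F : ℝ → ℝ := fun s => ∫ ω, g (ω (projIcc 0 T hT.le s)) ∂P with hF
    set G : ℝ → ℝ := fun s => ∫ ω, g (ω (projIcc 0 T hT.le s)) ∂Q with hG
    have cF : Continuous F := continuous_mean hT P hg M hM
    have cG : Continuous G := continuous_mean hT Q hg M hM
    have cφ : Continuous fun s => F s - G s := cF.sub cG
    have bφ : ∀ s, |F s - G s| ≤ M + M := fun s =>
      (abs_sub _ _).trans (add_le_add (abs_mean_le hT P M hM s) (abs_mean_le hT Q M hM s))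
    have h1 := h (fun s x => (F s - G s) * g x)
      ⟨(M + M) * M, fun s x => by
        rw [abs_mul]
        exact mul_le_mul (bφ s) (hM x) (abs_nonneg _) (by positivity)⟩
      (fun x => cφ.mul continuous_const)
      ⟨(M + M).toNNReal * K, fun s => by
        refine LipschitzWith.of_dist_le_mul fun x y => ?_
        rw [Real.dist_eq, ← mul_sub, abs_mul, NNReal.coe_mul, mul_assoc,
          Real.coe_toNNReal _ (by positivity)]
        exact mul_le_mul (bφ s) (by simpa [Real.dist_eq] using hgK.dist_le_mul x y)
          (abs_nonneg _) (by positivity)⟩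
    rw [swap_mean hT P hg M hM cφ _ bφ, swap_mean hT Q hg M hM cφ _ bφ] at h1
    have h2 : ∫ s in (0:ℝ)..T, (F s - G s) ^ 2 = 0 := by
      have h3 : ∫ s in (0:ℝ)..T, ((F s - G s) * F s - (F s - G s) * G s) = 0 := by
        exact (intervalIntegral.integral_sub ((cφ.mul cF).intervalIntegrable _ _)
          ((cφ.mul cG).intervalIntegrable _ _)).trans (sub_eq_zero.2 h1)
      rw [← h3]
      congr 1
      ext s
      ring
    rw [intervalIntegral.integral_of_le hT.le, ← integral_Icc_eq_integral_Ioc,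
      integral_eq_zero_iff_of_nonneg (fun s => sq_nonneg _)
        ((cφ.pow 2).continuousOn.integrableOn_Icc)] at h2
    have h4 := Measure.eqOn_Icc_of_ae_eq volume hT.ne h2 (cφ.pow 2).continuousOn
      continuousOn_const t.2
    have h5 : F t = G t := sub_eq_zero.1 (pow_eq_zero_iff two_ne_zero |>.1 h4)
    simpa [hF, hG] using h5
  intro t
  have hm : Measurable fun ω : C(Icc (0:ℝ) T, EuclideanSpace ℝ (Fin N)) => ω t :=
    (continuous_eval_const t).measurable
  have : IsProbabilityMeasure (P.map fun ω => ω t) :=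
    Measure.isProbabilityMeasure_map hm.aemeasurable
  have : IsProbabilityMeasure (Q.map fun ω => ω t) :=
    Measure.isProbabilityMeasure_map hm.aemeasurable
  refine ext_of_generate_finite _ ?_ isPiSystem_isClosed ?_ (by simp)
  · rw [BorelSpace.measurable_eq (α := EuclideanSpace ℝ (Fin N)), borel_eq_generateFrom_isClosed]
  · intro A hA
    have hpos : ∀ n : ℕ, (0:ℝ) < 1 / ((n:ℝ) + 1) := fun n => by positivity
    have lP := tendsto_integral_thickenedIndicator_of_isClosed (P.map fun ω => ω t) hA hpos
      tendsto_one_div_add_atTop_nhds_zero_nat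
    have lQ := tendsto_integral_thickenedIndicator_of_isClosed (Q.map fun ω => ω t) hA hpos
      tendsto_one_div_add_atTop_nhds_zero_nat
    have heq : ∀ n : ℕ, ∫ x, (thickenedIndicator (hpos n) A x : ℝ) ∂(P.map fun ω => ω t) =
        ∫ x, (thickenedIndicator (hpos n) A x : ℝ) ∂(Q.map fun ω => ω t) := by
      intro n
      have hL := lipschitzWith_thickenedIndicator (hpos n) A
      have hc : Continuous fun x => (thickenedIndicator (hpos n) A x : ℝ) :=
        NNReal.continuous_coe.comp hL.continuous
      rw [integral_map hm.aemeasurable hc.aestronglyMeasurable,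
        integral_map hm.aemeasurable hc.aestronglyMeasurable]
      refine key (fun x => (thickenedIndicator (hpos n) A x : ℝ)) _ (fun x y => hL x y)
        ⟨1, fun x => ?_⟩ t
      rw [abs_of_nonneg (NNReal.coe_nonneg _)]
      exact_mod_cast thickenedIndicator_le_one (hpos n) A x
    simp_rw [heq] at lP
    have := tendsto_nhds_unique lP lQ
    exact (measureReal_eq_measureReal_iff).1 this

end Stmt1
end
end

section
/- For all 0 ≤ t < s ≤ T, the 2d×2d covariance matrix Σ_{t,s} of the linearized frozen system is symmetric positive definite (in particular invertible, with positive determinant). -/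
/-!
Statement 6: the covariance matrix of the linearized frozen system is symmetric positive
definite (hence invertible with positive determinant) for all 0 ≤ t < s ≤ T.
-/

open MeasureTheory Set Matrix intervalIntegral

noncomputable section

namespace Stmt6

/-- `R_{r,s} = ∫_r^s K(v) dv`, entrywise. -/
def Rmat {d : ℕ} (K : ℝ → Matrix (Fin d) (Fin d) ℝ) (r s : ℝ) :
    Matrix (Fin d) (Fin d) ℝ :=
  Matrix.of fun i j => ∫ v in r..s, K v i j

/-- The 2d×2d covariance matrix `Σ_{t,s}` of the linearized frozen system. -/
def Sig {d : ℕ} (abar K : ℝ → Matrix (Fin d) (Fin d) ℝ) (t s : ℝ) :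
    Matrix (Fin d ⊕ Fin d) (Fin d ⊕ Fin d) ℝ :=
  Matrix.fromBlocks
    (Matrix.of fun i j => ∫ r in t..s, abar r i j)
    (Matrix.of fun i j => ∫ r in t..s, (abar r * (Rmat K r s)ᵀ) i j)
    (Matrix.of fun i j => ∫ r in t..s, (Rmat K r s * abar r) i j)
    (Matrix.of fun i j => ∫ r in t..s, (Rmat K r s * abar r * (Rmat K r s)ᵀ) i j)

lemma mat_ident {d : ℕ} (a R : Matrix (Fin d) (Fin d) ℝ) (z : Fin d ⊕ Fin d → ℝ) :
    z ⬝ᵥ (Matrix.fromBlocks a (a * Rᵀ) (R * a) (R * a * Rᵀ) *ᵥ z) =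
      (z ∘ Sum.inl + Rᵀ *ᵥ (z ∘ Sum.inr)) ⬝ᵥ (a *ᵥ (z ∘ Sum.inl + Rᵀ *ᵥ (z ∘ Sum.inr))) := by
  have hz : z = Sum.elim (z ∘ Sum.inl) (z ∘ Sum.inr) := by
    ext i; cases i <;> rfl
  generalize z ∘ Sum.inl = x at hz ⊢
  generalize z ∘ Sum.inr = y at hz ⊢
  subst hz
  have h : ∀ v : Fin d → ℝ, (Rᵀ *ᵥ y) ⬝ᵥ v = y ⬝ᵥ (R *ᵥ v) := by
    intro v
    rw [Matrix.mulVec_transpose, Matrix.dotProduct_mulVec]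
  rw [Matrix.fromBlocks_mulVec, sumElim_dotProduct_sumElim, add_dotProduct, h]
  simp only [Matrix.mulVec_add, Matrix.mulVec_mulVec, Matrix.mul_assoc, dotProduct_add,
    Sum.elim_comp_inl, Sum.elim_comp_inr]

lemma isum {ι : Type*} (S : Finset ι) {f : ι → ℝ → ℝ} {t s : ℝ}
    (h : ∀ i ∈ S, IntervalIntegrable (f i) volume t s) :
    IntervalIntegrable (fun r => ∑ i ∈ S, f i r) volume t s := by
  have := IntervalIntegrable.sum S h
  have e : (∑ i ∈ S, f i) = fun r => ∑ i ∈ S, f i r := by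
    ext r
    simp
  rwa [e] at this

lemma intble {f : ℝ → ℝ} (hf : Measurable f) {T C t s : ℝ}
    (hb : ∀ r ∈ Icc (0:ℝ) T, |f r| ≤ C) (ht : 0 ≤ t) (hts : t ≤ s) (hs : s ≤ T) :
    IntervalIntegrable f volume t s := by
  rw [intervalIntegrable_iff_integrableOn_Ioc_of_le hts]
  refine Measure.integrableOn_of_bounded (M := C) (by simp) hf.aestronglyMeasurable ?_
  refine (ae_restrict_iff' measurableSet_Ioc).2 (Filter.Eventually.of_forall fun r hr => ?_)
  exact hb r ⟨ht.trans hr.1.le, hr.2.trans hs⟩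

lemma abar_bound {d : ℕ} {Λ : ℝ} (hΛ : 1 < Λ) {a : Matrix (Fin d) (Fin d) ℝ} (hs : a.IsSymm)
    (hell : ∀ ζ : EuclideanSpace ℝ (Fin d),
      Λ⁻¹ * ‖ζ‖ ^ 2 ≤ ∑ i, ∑ j, a i j * ζ i * ζ j ∧
      ∑ i, ∑ j, a i j * ζ i * ζ j ≤ Λ * ‖ζ‖ ^ 2) (i j : Fin d) : |a i j| ≤ 2 * Λ := by
  have hf : ∀ ζ : Fin d → ℝ, 0 ≤ ζ ⬝ᵥ (a *ᵥ ζ) ∧ ζ ⬝ᵥ (a *ᵥ ζ) ≤ Λ * (ζ ⬝ᵥ ζ) := by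
    intro ζ
    have h := hell (WithLp.toLp 2 ζ)
    have e1 : ∑ i, ∑ j, a i j * ζ i * ζ j = ζ ⬝ᵥ (a *ᵥ ζ) := by
      simp only [dotProduct, Matrix.mulVec, Finset.mul_sum]
      exact Finset.sum_congr rfl fun i _ => Finset.sum_congr rfl fun j _ => by ring
    have e2 : ‖WithLp.toLp 2 ζ‖ ^ 2 = ζ ⬝ᵥ ζ := by
      rw [EuclideanSpace.real_norm_sq_eq]
      simp only [dotProduct]
      exact Finset.sum_congr rfl fun i _ => by ring
    rw [e2] at h
    have h1 : 0 ≤ ζ ⬝ᵥ ζ := by rw [← e2]; positivity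
    have h2 : 0 ≤ Λ⁻¹ := by positivity
    change _ ≤ ∑ i, ∑ j, a i j * ζ i * ζ j ∧ ∑ i, ∑ j, a i j * ζ i * ζ j ≤ _ at h
    rw [e1] at h
    exact ⟨(mul_nonneg h2 h1).trans h.1, h.2⟩
  have key : ∀ k : Fin d, Pi.single k (1:ℝ) ⬝ᵥ (Pi.single k (1:ℝ) : Fin d → ℝ) = 1 := by simp
  have hij : (Pi.single i (1:ℝ) ⬝ᵥ (Pi.single j (1:ℝ) : Fin d → ℝ)) ≤ 1 := by
    by_cases h : i = j
    · subst h; simp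
    · simp [Pi.single_apply, h]
  have hij0 : 0 ≤ (Pi.single i (1:ℝ) ⬝ᵥ (Pi.single j (1:ℝ) : Fin d → ℝ)) := by
    by_cases h : i = j
    · subst h; simp
    · simp [Pi.single_apply, h]
  have hc := dotProduct_comm (Pi.single j (1:ℝ)) (Pi.single i (1:ℝ) : Fin d → ℝ)
  have q : ∀ k l : Fin d, Pi.single k (1:ℝ) ⬝ᵥ (a *ᵥ (Pi.single l (1:ℝ) : Fin d → ℝ)) = a k l := by
    intro k l; simp
  have hi := hf (Pi.single i 1)
  have hj := hf (Pi.single j 1)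
  have hp := hf (Pi.single i 1 + Pi.single j 1)
  have hm := hf (Pi.single i 1 - Pi.single j 1)
  simp only [Matrix.mulVec_add, Matrix.mulVec_sub, add_dotProduct, sub_dotProduct, dotProduct_add,
    dotProduct_sub, q, key, hc] at hi hj hp hm
  have hs' : a j i = a i j := hs.apply i j
  rw [hs'] at hp hm
  rw [abs_le]
  constructor <;> nlinarith

lemma K_bound {d : ℕ} {Λ' : ℝ} (hΛ' : 1 < Λ') {A : Matrix (Fin d) (Fin d) ℝ}
    (h : ∀ ζ : EuclideanSpace ℝ (Fin d),
      ∑ i, ((Aᵀ *ᵥ (WithLp.equiv 2 _ ζ)) i) ^ 2 ≤ Λ' * ‖ζ‖ ^ 2) (i j : Fin d) :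
    |A i j| ≤ Λ' := by
  have h1 := h (EuclideanSpace.single i 1)
  have e : (WithLp.equiv 2 (Fin d → ℝ)) (EuclideanSpace.single i (1:ℝ)) = Pi.single i 1 := rfl
  rw [e] at h1
  simp at h1
  have h2 : (A i j)^2 ≤ ∑ k, (A i k)^2 :=
    Finset.single_le_sum (f := fun k => (A i k)^2) (fun k _ => sq_nonneg _) (Finset.mem_univ j)
  refine abs_le_of_sq_le_sq (by nlinarith) (by linarith)

lemma Rmat_mem {d : ℕ} {Ecal : Set (Matrix (Fin d) (Fin d) ℝ)}
    (hEclosed : IsClosed Ecal) (hEconv : Convex ℝ Ecal)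
    {K : ℝ → Matrix (Fin d) (Fin d) ℝ} {t s : ℝ} (hts : t < s)
    (hi : ∀ i j, IntervalIntegrable (fun r => K r i j) volume t s)
    (hK : ∀ r ∈ Icc t s, K r ∈ Ecal) : (s - t)⁻¹ • Rmat K t s ∈ Ecal := by
  let K' : ℝ → Fin d → Fin d → ℝ := K
  let E' : Set (Fin d → Fin d → ℝ) := Ecal
  have hc' : IsClosed E' := hEclosed
  have hv' : Convex ℝ E' := hEconv
  have hint : IntegrableOn K' (Ioc t s) volume := by
    refine Integrable.of_eval fun i => Integrable.of_eval fun j => ?_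
    exact (intervalIntegrable_iff_integrableOn_Ioc_of_le hts.le).1 (hi i j)
  have hm := Convex.set_average_mem (μ := volume) (t := Ioc t s) (f := K') (s := E')
    hv' hc' (by simp [hts]) (by simp) 
    ((ae_restrict_iff' measurableSet_Ioc).2 (Filter.Eventually.of_forall fun r hr =>
      hK r (Ioc_subset_Icc_self hr))) hint
  suffices e0 : (s - t)⁻¹ • Rmat K t s = (⨍ x in Ioc t s, K' x : Fin d → Fin d → ℝ) by
    rw [e0]; exact hm
  ext i j
  rw [setAverage_eq]
  have e : (∫ x in Ioc t s, K' x) i j = ∫ x in Ioc t s, K x i j := by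
    rw [eval_integral (fun i => hint.eval i), eval_integral (fun j => (hint.eval i).eval j)]
  change (s - t)⁻¹ * (∫ v in t..s, K v i j) = _ * ((∫ x in Ioc t s, K' x) i j)
  rw [e, intervalIntegral.integral_of_le hts.le]
  simp [hts.le]

theorem covariance_posDef
    (d : ℕ) (hd : 0 < d) (T : ℝ) (hT : 0 < T)
    (Λ Λ' : ℝ) (hΛ : 1 < Λ) (hΛ' : 1 < Λ')
    -- E : closed convex set of invertible matrices, uniformly non-degenerate
    (Ecal : Set (Matrix (Fin d) (Fin d) ℝ))
    (hEclosed : IsClosed Ecal) (hEconv : Convex ℝ Ecal)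
    (hEinv : ∀ A ∈ Ecal, IsUnit A)
    (hEnd : ∀ A ∈ Ecal, ∀ ζ : EuclideanSpace ℝ (Fin d),
      Λ'⁻¹ * ‖ζ‖ ^ 2 ≤ ∑ i, ((Aᵀ *ᵥ (WithLp.equiv 2 _ ζ)) i) ^ 2 ∧
      ∑ i, ((Aᵀ *ᵥ (WithLp.equiv 2 _ ζ)) i) ^ 2 ≤ Λ' * ‖ζ‖ ^ 2)
    -- ā : measurable, symmetric, uniformly elliptic
    (abar : ℝ → Matrix (Fin d) (Fin d) ℝ) (habar : ∀ i j, Measurable fun r => abar r i j)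
    (hsymm : ∀ r ∈ Icc (0:ℝ) T, (abar r).IsSymm)
    (hell : ∀ r ∈ Icc (0:ℝ) T, ∀ ζ : EuclideanSpace ℝ (Fin d),
      Λ⁻¹ * ‖ζ‖ ^ 2 ≤ ∑ i, ∑ j, abar r i j * ζ i * ζ j ∧
      ∑ i, ∑ j, abar r i j * ζ i * ζ j ≤ Λ * ‖ζ‖ ^ 2)
    -- K : measurable with values in E
    (K : ℝ → Matrix (Fin d) (Fin d) ℝ) (hK : ∀ i j, Measurable fun r => K r i j)
    (hKmem : ∀ r ∈ Icc (0:ℝ) T, K r ∈ Ecal) :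
    ∀ t s : ℝ, 0 ≤ t → t < s → s ≤ T →
      (Sig abar K t s).IsSymm ∧ (Sig abar K t s).PosDef ∧
      IsUnit (Sig abar K t s) ∧ 0 < (Sig abar K t s).det := by
  intro t s ht hts hs
  have hsub : ∀ r ∈ Icc t s, r ∈ Icc (0:ℝ) T := fun r hr => ⟨ht.trans hr.1, hr.2.trans hs⟩
  have haI : ∀ i j, IntervalIntegrable (fun r => abar r i j) volume t s := fun i j =>
    intble (habar i j) (fun r hr => abar_bound hΛ (hsymm r hr) (hell r hr) i j) ht hts.le hs
  have hKI : ∀ i j, IntervalIntegrable (fun r => K r i j) volume t s := fun i j =>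
    intble (hK i j) (fun r hr => K_bound hΛ' (fun ζ => (hEnd _ (hKmem r hr) ζ).2) i j)
      ht hts.le hs
  have hRc : ∀ i j, ContinuousOn (fun r => Rmat K r s i j) (Icc t s) := by
    intro i j
    have h := intervalIntegral.continuousOn_primitive_interval_left
      (f := fun r => K r i j) (a := t) (b := s) (μ := volume)
      (by rw [uIcc_of_le hts.le]
          exact (intervalIntegrable_iff_integrableOn_Icc_of_le hts.le).1 (hKI i j))
    rwa [uIcc_of_le hts.le] at h
  have hRc' : ∀ i j, ContinuousOn (fun r => Rmat K r s i j) (uIcc t s) := by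
    rwa [uIcc_of_le hts.le]
  let M : ℝ → Matrix (Fin d ⊕ Fin d) (Fin d ⊕ Fin d) ℝ := fun r =>
    Matrix.fromBlocks (abar r) (abar r * (Rmat K r s)ᵀ) (Rmat K r s * abar r)
      (Rmat K r s * abar r * (Rmat K r s)ᵀ)
  have hSM : ∀ i j, Sig abar K t s i j = ∫ r in t..s, M r i j := by
    rintro (i | i) (j | j) <;> rfl
  have hRA : ∀ i j, IntervalIntegrable (fun r => (Rmat K r s * abar r) i j) volume t s := by
    intro i j
    simp only [Matrix.mul_apply]
    exact isum _ (f := fun k r => Rmat K r s i k * abar r k j)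
      fun k _ => (haI k j).continuousOn_mul (hRc' i k)
  have hMI : ∀ i j, IntervalIntegrable (fun r => M r i j) volume t s := by
    rintro (i | i) (j | j)
    · exact haI i j
    · change IntervalIntegrable (fun r => (abar r * (Rmat K r s)ᵀ) i j) volume t s
      simp only [Matrix.mul_apply, Matrix.transpose_apply]
      exact isum _ (f := fun k r => abar r i k * Rmat K r s j k)
        fun k _ => (haI i k).mul_continuousOn (hRc' j k)
    · exact hRA i j
    · change IntervalIntegrable (fun r => (Rmat K r s * abar r * (Rmat K r s)ᵀ) i j) volume t s
      simp only [Matrix.mul_apply (N := (Rmat K _ s)ᵀ), Matrix.transpose_apply]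
      exact isum _ (f := fun k r => (Rmat K r s * abar r) i k * Rmat K r s j k)
        fun k _ => (hRA i k).mul_continuousOn (hRc' j k)
  have hMs : ∀ r ∈ Icc t s, (M r).IsSymm := by
    intro r hr
    have h := (hsymm r (hsub r hr)).eq
    simp only [M, Matrix.IsSymm, Matrix.fromBlocks_transpose, Matrix.transpose_mul,
      Matrix.transpose_transpose, h, Matrix.mul_assoc]
  have hS : (Sig abar K t s).IsSymm := by
    ext i j
    rw [Matrix.transpose_apply, hSM, hSM]
    refine intervalIntegral.integral_congr fun r hr => ?_
    rw [uIcc_of_le hts.le] at hr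
    exact (hMs r hr).apply i j
  have hP : (Sig abar K t s).PosDef := by
    refine Matrix.PosDef.of_dotProduct_mulVec_pos ?_ ?_
    · rw [Matrix.IsHermitian, Matrix.conjTranspose_eq_transpose_of_trivial]; exact hS
    intro z hz
    rw [star_trivial]
    let w : ℝ → Fin d → ℝ := fun r => z ∘ Sum.inl + (Rmat K r s)ᵀ *ᵥ (z ∘ Sum.inr)
    have hq : z ⬝ᵥ (Sig abar K t s *ᵥ z) = ∫ r in t..s, z ⬝ᵥ (M r *ᵥ z) := by
      simp only [dotProduct, Matrix.mulVec, hSM]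
      rw [intervalIntegral.integral_finsetSum]
      · refine Finset.sum_congr rfl fun i _ => ?_
        rw [intervalIntegral.integral_const_mul, intervalIntegral.integral_finsetSum]
        · simp only [intervalIntegral.integral_mul_const]
        · intro j _
          exact (hMI i j).mul_const _
      · intro i _
        exact (isum _ (f := fun j r => M r i j * z j)
          fun j _ => (hMI i j).mul_const _).const_mul _
    have hqI : IntervalIntegrable (fun r => z ⬝ᵥ (M r *ᵥ z)) volume t s := by
      simp only [dotProduct, Matrix.mulVec]
      refine isum _ (f := fun i r => z i * ∑ j, M r i j * z j) fun i _ => ?_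
      exact (isum _ (f := fun j r => M r i j * z j)
          fun j _ => (hMI i j).mul_const _).const_mul _
    let g : ℝ → ℝ := fun r => Λ⁻¹ * ∑ i, (w r i) ^ 2
    have hwc : ∀ i, ContinuousOn (fun r => w r i) (Icc t s) := by
      intro i
      simp only [w, Pi.add_apply, Matrix.mulVec, dotProduct, Matrix.transpose_apply]
      exact continuousOn_const.add (continuousOn_finsetSum _ fun j _ =>
        (hRc j i).mul continuousOn_const)
    have hgc : ContinuousOn g (Icc t s) :=
      continuousOn_const.mul (continuousOn_finsetSum _ fun i _ => (hwc i).pow 2)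
    have hΛ0 : 0 < Λ⁻¹ := by positivity
    have hg0 : ∀ r, 0 ≤ g r := fun r =>
      mul_nonneg hΛ0.le (Finset.sum_nonneg fun i _ => sq_nonneg _)
    have hgq : ∀ r ∈ Icc t s, g r ≤ z ⬝ᵥ (M r *ᵥ z) := by
      intro r hr
      have h := (hell r (hsub r hr) (WithLp.toLp 2 (w r))).1
      rw [EuclideanSpace.real_norm_sq_eq] at h
      refine h.trans (le_of_eq ?_)
      rw [mat_ident]
      simp only [dotProduct, Matrix.mulVec, Finset.mul_sum]
      exact Finset.sum_congr rfl fun i _ => Finset.sum_congr rfl fun j _ => by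
        simp only [w, Matrix.mulVec, dotProduct]; ring
    have hgz : ∀ r, ¬ 0 < g r → w r = 0 := by
      intro r h
      have h0 : g r = 0 := le_antisymm (not_lt.1 h) (hg0 r)
      have h1 : ∑ i, (w r i) ^ 2 = 0 := (mul_eq_zero.1 h0).resolve_left hΛ0.ne'
      rw [Finset.sum_eq_zero_iff_of_nonneg fun i _ => sq_nonneg _] at h1
      ext i
      exact pow_eq_zero_iff two_ne_zero |>.1 (h1 i (Finset.mem_univ i))
    have hex : ∃ c ∈ Icc t s, 0 < g c := by
      by_contra hcon
      push Not at hcon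
      have hs0 := hgz s (not_lt.2 (hcon s ⟨hts.le, le_rfl⟩))
      have ht0 := hgz t (not_lt.2 (hcon t ⟨le_rfl, hts.le⟩))
      have hRs : Rmat K s s = 0 := by ext i j; simp [Rmat]
      have hx : z ∘ Sum.inl = 0 := by simpa [w, hRs] using hs0
      have hy0 : (Rmat K t s)ᵀ *ᵥ (z ∘ Sum.inr) = 0 := by simpa [w, hx] using ht0
      have hu := hEinv _ (Rmat_mem hEclosed hEconv hts hKI fun r hr => hKmem r (hsub r hr))
      have hu' : IsUnit ((s - t)⁻¹ • Rmat K t s)ᵀ := (Matrix.isUnit_transpose _).2 hu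
      have hy1 : ((s - t)⁻¹ • Rmat K t s)ᵀ *ᵥ (z ∘ Sum.inr) = 0 := by
        rw [Matrix.transpose_smul, Matrix.smul_mulVec, hy0, smul_zero]
      have hy : z ∘ Sum.inr = 0 :=
        Matrix.mulVec_injective_of_isUnit hu' (by rw [hy1, Matrix.mulVec_zero])
      apply hz
      ext i
      rcases i with i | i
      · exact congrFun hx i
      · exact congrFun hy i
    rw [hq]
    refine lt_of_lt_of_le (intervalIntegral.integral_pos hts hgc (fun r _ => hg0 r) hex) ?_
    refine intervalIntegral.integral_mono_on hts.le ?_ hqI hgq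
    exact ContinuousOn.intervalIntegrable (by rwa [uIcc_of_le hts.le])
  exact ⟨hS, hP, hP.isUnit, hP.det_pos⟩

end Stmt6
end
end

section
/- Let γ > 0 and α ∈ (0,1) with α < 1 − 1/γ, let β ∈ (0,1), and let (Ω, 𝓕, ℙ) be a probability space carrying a real-valued process (𝒲_t)_{t≥0} with continuous paths such that almost surely 𝒲_t = t^γ 𝒲_1 for all t ≥ 0, and such that E|𝒲_1| < +∞. Let x > 0 and let X be a real-valued process with continuous paths satisfying almost surely X_t = x + ∫_0^t sign(X_s)|X_s|^α ds + 𝒲_t for all t ≥ 0. Then there exists ρ > 0, depending only on α, β, γ and E|𝒲_1| (in particular not on x), such that ℙ( τ(X) ≥ ρ ) ≥ 3/4. -/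
/-!
Statement 14 (Lemma 4.1 of the paper): with probability at least 3/4 the solution of the
perturbed Peano equation stays above the curve `(1−β) c_α t^{1/(1−α)}` up to a time `ρ`
depending only on `α`, `β`, `γ` and (a bound `M` on) `E|𝒲_1|` — in particular not on the
initial condition `x` nor on the solution `X`.
-/

open MeasureTheory Set intervalIntegral

noncomputable section

namespace Stmt14

theorem path_escape (γ α β K : ℝ) (hα : α ∈ Ioo (0:ℝ) 1) (hK : 0 < K)
    (hγ : 1 / (1 - α) < γ) (hβ : β ∈ Ioo (0:ℝ) 1) (w x : ℝ) (hw : |w| ≤ K) (hx : 0 < x)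
    (Y : ℝ → ℝ) (hY : Continuous Y)
    (hE : ∀ t : ℝ, 0 ≤ t →
      Y t = x + (∫ s in (0:ℝ)..t, Real.sign (Y s) * |Y s| ^ α) + t ^ γ * w)
    (t : ℝ) (ht : 0 < t)
    (hYt : Y t ≤ (1 - β) * (1 - α) ^ ((1:ℝ) / (1 - α)) * t ^ ((1:ℝ) / (1 - α))) :
    (((1 - β) ^ α - (1 - β)) * (1 - α) ^ ((1:ℝ) / (1 - α)) / K) ^ (1 / (γ - 1 / (1 - α))) ≤ t := by
  obtain ⟨hα0, hα1⟩ := hα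
  obtain ⟨hβ0, hβ1⟩ := hβ
  have h1α : 0 < 1 - α := by linarith
  have h1β : 0 < 1 - β := by linarith
  set p : ℝ := 1 / (1 - α) with hp
  have hp0 : 0 < p := by positivity
  have hpα : p * α + 1 = p := by rw [hp]; field_simp; ring
  set c : ℝ := (1 - α) ^ p with hc
  have hc0 : 0 < c := by positivity
  have hcα : c ^ α = c * p := by
    rw [hc, ← Real.rpow_mul h1α.le]
    have : p * α = p - 1 := by linarith
    rw [this, Real.rpow_sub h1α, Real.rpow_one, hp]
    field_simp
  have hbc : Continuous fun s : ℝ => (1 - β) * c * s ^ p :=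
    continuous_const.mul (Real.continuous_rpow_const hp0.le)
  -- first hitting time
  have hScomp : IsCompact (Icc 0 t ∩ {s | Y s ≤ (1 - β) * c * s ^ p}) :=
    isCompact_Icc.inter_right (isClosed_le hY hbc)
  obtain ⟨t0, ⟨⟨ht0, ht0t⟩, ht0Y⟩, hmin⟩ := hScomp.exists_isLeast ⟨t, ⟨ht.le, le_refl t⟩, hYt⟩
  have ht0Y' : Y t0 ≤ (1 - β) * c * t0 ^ p := ht0Y
  have hγ0 : γ ≠ 0 := by linarith
  have ht0pos : 0 < t0 := by
    rcases ht0.lt_or_eq with h | h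
    · exact h
    · exfalso
      have h0 := hE 0 le_rfl
      rw [← h, Real.zero_rpow hp0.ne'] at ht0Y'
      simp [Real.zero_rpow hγ0] at h0
      linarith
  have hlt : ∀ s ∈ Ico 0 t0, (1 - β) * c * s ^ p < Y s := by
    intro s hs
    by_contra hcon
    have := hmin ⟨⟨hs.1, hs.2.le.trans ht0t⟩, not_lt.mp hcon⟩
    linarith [hs.2]
  have hle : ∀ s ∈ Icc 0 t0, (1 - β) * c * s ^ p ≤ Y s := by
    have hcl : Icc 0 t0 ⊆ {s | (1 - β) * c * s ^ p ≤ Y s} := by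
      rw [← closure_Ico ht0pos.ne]
      exact closure_minimal (fun s hs => (hlt s hs).le) (isClosed_le hbc hY)
    exact hcl
  have hint : (∫ s in (0:ℝ)..t0, Real.sign (Y s) * |Y s| ^ α) = ∫ s in (0:ℝ)..t0, |Y s| ^ α := by
    apply intervalIntegral.integral_congr
    intro s hs
    rw [uIcc_of_le ht0] at hs
    have h1 := hle s hs
    have h2 : 0 ≤ (1 - β) * c * s ^ p :=
      mul_nonneg (by positivity) (Real.rpow_nonneg hs.1 _)
    rcases (h2.trans h1).lt_or_eq with h | h
    · simp [Real.sign_of_pos h]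
    · simp [← h, Real.zero_rpow hα0.ne']
  have hmono : (∫ s in (0:ℝ)..t0, ((1 - β) * c) ^ α * s ^ (p * α)) ≤
      ∫ s in (0:ℝ)..t0, |Y s| ^ α := by
    apply intervalIntegral.integral_mono_on ht0
    · exact (continuous_const.mul
        (Real.continuous_rpow_const (by positivity))).intervalIntegrable _ _
    · exact (hY.abs.rpow_const (fun _ => Or.inr hα0.le)).intervalIntegrable _ _
    · intro s hs
      rw [Real.rpow_mul hs.1, ← Real.mul_rpow (by positivity) (Real.rpow_nonneg hs.1 _)]
      exact Real.rpow_le_rpow (mul_nonneg (by positivity) (Real.rpow_nonneg hs.1 _))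
        ((hle s hs).trans (le_abs_self _)) hα0.le
  have hval : (∫ s in (0:ℝ)..t0, ((1 - β) * c) ^ α * s ^ (p * α)) =
      (1 - β) ^ α * c * t0 ^ p := by
    have hpα0 : 0 < p * α := by positivity
    rw [intervalIntegral.integral_const_mul, integral_rpow (Or.inl (by linarith)), hpα,
      Real.zero_rpow hp0.ne', Real.mul_rpow h1β.le hc0.le, hcα]
    field_simp
    ring
  have hEt := hE t0 ht0
  rw [hint] at hEt
  have hW : -(t0 ^ γ * K) ≤ t0 ^ γ * w := by
    have := mul_le_mul_of_nonneg_left ((neg_le_neg hw).trans (neg_abs_le w))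
      (Real.rpow_nonneg ht0 γ)
    linarith
  have hkey : ((1 - β) ^ α - (1 - β)) * c * t0 ^ p ≤ t0 ^ γ * K := by
    rw [hval] at hmono
    nlinarith
  have hγp : 0 < γ - p := by linarith
  have hsplit : t0 ^ γ = t0 ^ (γ - p) * t0 ^ p := by
    rw [← Real.rpow_add ht0pos]; congr 1; ring
  have htp : 0 < t0 ^ p := by positivity
  have hδ : ((1 - β) ^ α - (1 - β)) * c / K ≤ t0 ^ (γ - p) := by
    rw [div_le_iff₀ hK]
    rw [hsplit] at hkey
    nlinarith
  have hdiff : 0 ≤ (1 - β) ^ α - (1 - β) := by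
    have := Real.rpow_le_rpow_of_exponent_ge h1β (by linarith) hα1.le
    rw [Real.rpow_one] at this
    linarith
  calc (((1 - β) ^ α - (1 - β)) * c / K) ^ (1 / (γ - p))
      ≤ (t0 ^ (γ - p)) ^ (1 / (γ - p)) :=
        Real.rpow_le_rpow (by positivity) hδ (by positivity)
    _ = t0 := by rw [← Real.rpow_mul ht0, mul_one_div_cancel hγp.ne', Real.rpow_one]
    _ ≤ t := ht0t

theorem escape_probability
    (γ α β M : ℝ) (hγ : 0 < γ) (hα : α ∈ Ioo (0:ℝ) 1) (hαγ : α < 1 - 1 / γ)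
    (hβ : β ∈ Ioo (0:ℝ) 1) :
    ∃ ρ > (0:ℝ),
      ∀ (Ω : Type) [MeasurableSpace Ω], ∀ ℙ : Measure Ω, IsProbabilityMeasure ℙ →
      ∀ W : ℝ → Ω → ℝ,
        -- 𝒲 has continuous paths, is γ-self-similar, and 𝒲_1 is integrable with E|𝒲_1| ≤ M
        (∀ ω, Continuous fun t => W t ω) →
        (∀ᵐ ω ∂ℙ, ∀ t : ℝ, 0 ≤ t → W t ω = t ^ γ * W 1 ω) →
        Integrable (W 1) ℙ →
        (∫ ω, |W 1 ω| ∂ℙ) ≤ M →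
        -- X is a solution of the perturbed Peano equation started from x > 0
        ∀ x : ℝ, 0 < x → ∀ X : ℝ → Ω → ℝ,
          (∀ ω, Continuous fun t => X t ω) →
          (∀ᵐ ω ∂ℙ, ∀ t : ℝ, 0 ≤ t →
            X t ω = x + (∫ s in (0:ℝ)..t, Real.sign (X s ω) * |X s ω| ^ α) + W t ω) →
          -- conclusion : ℙ(τ(X) ≥ ρ) ≥ 3/4, where
          -- τ(X) = inf{t > 0 : X_t ≤ (1−β) c_α t^{1/(1−α)}}
          (3 : ENNReal) / 4 ≤
            ℙ {ω | ∀ t : ℝ, 0 < t →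
              X t ω ≤ (1 - β) * (1 - α) ^ ((1:ℝ) / (1 - α)) * t ^ ((1:ℝ) / (1 - α)) →
                ρ ≤ t} := by
  have hα0 := hα.1
  have hα1 := hα.2
  have hβ0 := hβ.1
  have hβ1 := hβ.2
  have h1α : 0 < 1 - α := by linarith
  have h1β : 0 < 1 - β := by linarith
  have hγ' : 1 / (1 - α) < γ := by
    have h : 1 / γ < 1 - α := by linarith
    rw [div_lt_iff₀ hγ] at h
    rw [div_lt_iff₀ h1α]
    linarith
  have hK : 0 < 4 * |M| + 1 := by positivity
  have hdiff : 0 < (1 - β) ^ α - (1 - β) := by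
    have := Real.rpow_lt_rpow_of_exponent_gt h1β (by linarith) hα1
    rw [Real.rpow_one] at this
    linarith
  refine ⟨(((1 - β) ^ α - (1 - β)) * (1 - α) ^ ((1:ℝ) / (1 - α)) / (4 * |M| + 1)) ^
    (1 / (γ - 1 / (1 - α))), by positivity, ?_⟩
  intro Ω _ ℙ hℙ W _ hWs hWi hWM x hx X hX hXE
  set G : Set Ω := _
  change (3 : ENNReal) / 4 ≤ ℙ G
  set B : Set Ω := {ω | 4 * |M| + 1 ≤ |W 1 ω|} with hB
  have hcover : ∀ᵐ ω ∂ℙ, ω ∈ (univ : Set Ω) → ω ∈ G ∪ B := by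
    filter_upwards [hWs, hXE] with ω h1 h2 _
    by_cases hb : ω ∈ B
    · exact Or.inr hb
    · left
      intro t ht hXt
      refine path_escape γ α β (4 * |M| + 1) hα hK hγ' hβ (W 1 ω) x (not_le.mp hb).le hx
        (fun t => X t ω) (hX ω) ?_ t ht hXt
      intro s hs
      rw [← h1 s hs]
      exact h2 s hs
  have hBr : ℙ.real B ≤ 1 / 4 := by
    have h := mul_meas_ge_le_integral_of_nonneg (μ := ℙ) (f := fun ω => |W 1 ω|)
      (Filter.Eventually.of_forall fun ω => abs_nonneg _) hWi.abs (4 * |M| + 1)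
    have h' : (4 * |M| + 1) * ℙ.real B ≤ M := h.trans hWM
    have := le_abs_self M
    by_contra hcon
    push Not at hcon
    nlinarith
  have hBe : ℙ B ≤ 1 / 4 := by
    rw [← ENNReal.ofReal_toReal (measure_ne_top ℙ B)]
    refine (ENNReal.ofReal_le_ofReal hBr).trans (le_of_eq ?_)
    rw [ENNReal.ofReal_div_of_pos (by norm_num)]
    simp
  have h1 : (1 : ENNReal) ≤ ℙ G + 1 / 4 := by
    calc (1 : ENNReal) = ℙ univ := measure_univ.symm
      _ ≤ ℙ (G ∪ B) := measure_mono_ae hcover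
      _ ≤ ℙ G + ℙ B := measure_union_le _ _
      _ ≤ ℙ G + 1 / 4 := by gcongr
  have h34 : (3 : ENNReal) / 4 + 1 / 4 = 1 := by
    rw [ENNReal.div_add_div_same]
    norm_num
    exact ENNReal.div_self (by norm_num) (by norm_num)
  have h2 : (3 : ENNReal) / 4 + 1 / 4 ≤ ℙ G + 1 / 4 := h34.le.trans h1
  have h4 : (1 : ENNReal) / 4 ≠ ⊤ := by simp
  exact (ENNReal.add_le_add_iff_right h4).mp h2

end Stmt14
end
end

section
/- Let α ∈ (0,1), β ∈ (0,1), c_α := (1−α)^{1/(1−α)}, x > 0, S > 0, and let w : [0, S] → ℝ be continuous with w(0) = 0. Suppose X : [0, S] → ℝ is continuous and satisfies X_t = x + ∫_0^t sign(X_s)|X_s|^α ds + w_t for all t ∈ [0, S], and suppose in addition that X_t ≥ (1−β) c_α t^{1/(1−α)} for all t ∈ [0, S]. Then X_t ≥ (1−β)^α c_α t^{1/(1−α)} + w_t for all t ∈ [0, S]. (Key computation: ∫_0^t ((1−β) c_α s^{1/(1−α)})^α ds = (1−β)^α c_α t^{1/(1−α)}.) -/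
/-!
Statement 15: key deterministic lower bound in the proof of Lemma 4.1: on the event where
`X` stays above `(1−β) c_α t^{1/(1−α)}`, one has `X_t ≥ (1−β)^α c_α t^{1/(1−α)} + w_t`.
-/

open Set intervalIntegral

noncomputable section

namespace Stmt15

theorem deterministic_lower_bound
    (α β : ℝ) (hα : α ∈ Ioo (0:ℝ) 1) (hβ : β ∈ Ioo (0:ℝ) 1)
    (x S : ℝ) (hx : 0 < x) (hS : 0 < S)
    (w : ℝ → ℝ) (hw : ContinuousOn w (Icc 0 S)) (hw0 : w 0 = 0)
    (X : ℝ → ℝ) (hX : ContinuousOn X (Icc 0 S))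
    (hXeq : ∀ t ∈ Icc (0:ℝ) S,
      X t = x + (∫ s in (0:ℝ)..t, Real.sign (X s) * |X s| ^ α) + w t)
    (hXlb : ∀ t ∈ Icc (0:ℝ) S,
      (1 - β) * (1 - α) ^ ((1:ℝ) / (1 - α)) * t ^ ((1:ℝ) / (1 - α)) ≤ X t) :
    ∀ t ∈ Icc (0:ℝ) S,
      (1 - β) ^ α * (1 - α) ^ ((1:ℝ) / (1 - α)) * t ^ ((1:ℝ) / (1 - α)) + w t ≤ X t := by
  obtain ⟨hα0, hα1⟩ := hα
  obtain ⟨hβ0, hβ1⟩ := hβ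
  intro t ht
  have h1 : 0 < 1 - α := by linarith
  have h2 : 0 < 1 - β := by linarith
  set p : ℝ := (1:ℝ) / (1 - α) with hp
  have hppos : 0 < p := by positivity
  have hpα : p * α = p - 1 := by rw [hp]; field_simp; ring
  set c : ℝ := (1 - α) ^ p with hc
  have hcpos : 0 < c := Real.rpow_pos_of_pos h1 _
  have hcα : c ^ α * (1 - α) = c := by
    rw [hc, ← Real.rpow_mul h1.le, hpα, ← Real.rpow_add_one h1.ne']
    congr 1; ring
  have hsub : Icc 0 t ⊆ Icc 0 S := Icc_subset_Icc_right ht.2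
  have hXnn : ∀ s ∈ Icc (0:ℝ) t, 0 ≤ X s := fun s hs =>
    le_trans (mul_nonneg (mul_nonneg h2.le hcpos.le) (Real.rpow_nonneg hs.1 _)) (hXlb s (hsub hs))
  have hI : (∫ s in (0:ℝ)..t, Real.sign (X s) * |X s| ^ α) = ∫ s in (0:ℝ)..t, X s ^ α := by
    apply intervalIntegral.integral_congr
    intro s hs
    rw [uIcc_of_le ht.1] at hs
    have := hXnn s hs
    rcases this.eq_or_lt with h | h
    · simp [← h, Real.zero_rpow hα0.ne']
    · simp [Real.sign_of_pos h, abs_of_pos h]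
  have hJ : (∫ s in (0:ℝ)..t, (1 - β) ^ α * c ^ α * s ^ (p - 1)) = (1 - β) ^ α * c * t ^ p := by
    rw [intervalIntegral.integral_const_mul, integral_rpow (Or.inl (by linarith))]
    rw [sub_add_cancel, Real.zero_rpow hppos.ne', sub_zero]
    have : t ^ p / p = (1 - α) * t ^ p := by rw [hp]; field_simp
    rw [this]
    calc _ = (1 - β) ^ α * (c ^ α * (1 - α)) * t ^ p := by ring
      _ = _ := by rw [hcα]
  have hle : (∫ s in (0:ℝ)..t, (1 - β) ^ α * c ^ α * s ^ (p - 1)) ≤ ∫ s in (0:ℝ)..t, X s ^ α := by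
    apply intervalIntegral.integral_mono_on ht.1
    · exact (intervalIntegral.intervalIntegrable_rpow' (by linarith)).const_mul _
    · apply ContinuousOn.intervalIntegrable
      rw [uIcc_of_le ht.1]
      exact (hX.mono hsub).rpow_const (fun _ _ => Or.inr hα0.le)
    · intro s hs
      have := Real.rpow_le_rpow (mul_nonneg (mul_nonneg h2.le hcpos.le) (Real.rpow_nonneg hs.1 p))
        (hXlb s (hsub hs)) hα0.le
      rwa [Real.mul_rpow (mul_nonneg h2.le hcpos.le) (Real.rpow_nonneg hs.1 p),
        Real.mul_rpow h2.le hcpos.le, ← Real.rpow_mul hs.1, hpα] at this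
  have := hXeq t ht
  rw [hI] at this
  rw [hJ] at hle
  linarith

end Stmt15
end
end

section
/- Let α ∈ (0,1), β ∈ (0,1), c_α := (1−α)^{1/(1−α)}, and define η by 1−η = ((1−β)^α + (1−β))/2 (so that 0 < η < β) and c̃_α := (β−η) c_α > 0. Let x > 0, ρ > 0, let w : [0,∞) → ℝ be continuous with w(0) = 0, and let X : [0,∞) → ℝ be continuous with X_t = x + ∫_0^t sign(X_s)|X_s|^α ds + w_t for all t ≥ 0. If c̃_α t^{1/(1−α)} + w_t > 0 for all t ∈ (0, ρ], then τ(X) ≥ ρ. -/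
/-!
Statement 16: if the deterministic curve `c̃_α t^{1/(1−α)} + w_t` stays positive on `(0, ρ]`,
then the solution `X` of the perturbed Peano equation started from `x > 0` satisfies
`τ(X) ≥ ρ`, where `τ(X) = inf{t > 0 : X_t ≤ (1−β) c_α t^{1/(1−α)}}`.
-/

open Set intervalIntegral

noncomputable section

namespace Stmt16

theorem tau_lower_bound
    (α β : ℝ) (hα : α ∈ Ioo (0:ℝ) 1) (hβ : β ∈ Ioo (0:ℝ) 1)
    (η ctil : ℝ)
    (hη : 1 - η = ((1 - β) ^ α + (1 - β)) / 2)
    (hctil : ctil = (β - η) * (1 - α) ^ ((1:ℝ) / (1 - α)))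
    (x ρ : ℝ) (hx : 0 < x) (hρ : 0 < ρ)
    (w : ℝ → ℝ) (hw : Continuous w) (hw0 : w 0 = 0)
    (X : ℝ → ℝ) (hX : Continuous X)
    (hXeq : ∀ t : ℝ, 0 ≤ t →
      X t = x + (∫ s in (0:ℝ)..t, Real.sign (X s) * |X s| ^ α) + w t)
    (hpos : ∀ t ∈ Ioc (0:ℝ) ρ, 0 < ctil * t ^ ((1:ℝ) / (1 - α)) + w t) :
    -- τ(X) ≥ ρ : any time t > 0 at which X goes below the curve satisfies t ≥ ρ
    ∀ t : ℝ, 0 < t →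
      X t ≤ (1 - β) * (1 - α) ^ ((1:ℝ) / (1 - α)) * t ^ ((1:ℝ) / (1 - α)) → ρ ≤ t := by
  obtain ⟨ha0, ha1⟩ := hα
  obtain ⟨hb0, hb1⟩ := hβ
  intro t ht hXt
  by_contra hlt
  push Not at hlt
  have h1a : 0 < 1 - α := by linarith
  have h1b : 0 < 1 - β := by linarith
  set p : ℝ := (1:ℝ) / (1 - α) with hp
  set c : ℝ := (1 - α) ^ p with hc
  have hp0 : 0 < p := by positivity
  have hc0 : 0 < c := by positivity
  have hpa : p * α = p - 1 := by rw [hp]; field_simp; ring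
  have hf : Continuous (fun s : ℝ => (1 - β) * c * s ^ p) :=
    continuous_const.mul (Real.continuous_rpow_const hp0.le)
  have hScl : IsCompact (Icc 0 t ∩ {s : ℝ | X s ≤ (1 - β) * c * s ^ p}) :=
    isCompact_Icc.inter_right (isClosed_le hX hf)
  obtain ⟨T, ⟨⟨hT0, hTt⟩, hTX⟩, hTmin⟩ :=
    hScl.exists_isLeast ⟨t, ⟨ht.le, le_refl t⟩, hXt⟩
  simp only [mem_setOf_eq] at hTX
  have hX0 : X 0 = x := by
    have := hXeq 0 le_rfl
    simpa [hw0] using this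
  have hTpos : 0 < T := by
    rcases hT0.eq_or_lt with h | h
    · rw [← h, hX0, Real.zero_rpow hp0.ne'] at hTX
      linarith
    · exact h
  have hbelow : ∀ s, 0 ≤ s → s < T → (1 - β) * c * s ^ p < X s := by
    intro s hs hsT
    by_contra hcon
    push Not at hcon
    have : T ≤ s := hTmin ⟨⟨hs, by linarith⟩, hcon⟩
    linarith
  have hca : c ^ α * (1 / p) = c := by
    rw [hc, ← Real.rpow_mul h1a.le, hpa, Real.rpow_sub h1a, Real.rpow_one, hp]
    field_simp
  have hcont : Continuous (fun s => |X s| ^ α) :=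
    (Real.continuous_rpow_const ha0.le).comp hX.abs
  have hint : (∫ s in (0:ℝ)..T, Real.sign (X s) * |X s| ^ α) = ∫ s in (0:ℝ)..T, |X s| ^ α := by
    have hae : ∀ᵐ s : ℝ, s ≠ T := by
      simp [MeasureTheory.ae_iff]
    apply intervalIntegral.integral_congr_ae
    filter_upwards [hae] with s hs hmem
    rw [uIoc_of_le hT0] at hmem
    have h1 := hbelow s hmem.1.le (lt_of_le_of_ne hmem.2 hs)
    have h2 : 0 ≤ (1 - β) * c * s ^ p := by
      have := Real.rpow_nonneg hmem.1.le p
      positivity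
    rw [Real.sign_of_pos (by linarith), one_mul]
  have hcont2 : Continuous (fun s : ℝ => (1 - β) ^ α * c ^ α * |s| ^ (p * α)) :=
    continuous_const.mul ((Real.continuous_rpow_const (by positivity)).comp continuous_abs)
  have hle : (∫ s in (0:ℝ)..T, (1 - β) ^ α * c ^ α * |s| ^ (p * α)) ≤ ∫ s in (0:ℝ)..T, |X s| ^ α := by
    apply intervalIntegral.integral_mono_on_of_le_Ioo hT0
      (hcont2.intervalIntegrable _ _) (hcont.intervalIntegrable _ _)
    intro s hs
    have h1 := hbelow s hs.1.le hs.2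
    have h2 : 0 ≤ s ^ p := Real.rpow_nonneg hs.1.le p
    have h3 : 0 ≤ (1 - β) * c * s ^ p := by positivity
    rw [abs_of_pos hs.1, Real.rpow_mul hs.1.le, ← Real.mul_rpow h1b.le hc0.le,
      ← Real.mul_rpow (by positivity) h2]
    exact Real.rpow_le_rpow h3 (h1.le.trans (le_abs_self _)) ha0.le
  have hval : (∫ s in (0:ℝ)..T, (1 - β) ^ α * c ^ α * |s| ^ (p * α)) = (1 - β) ^ α * c * T ^ p := by
    have h1 : (∫ s in (0:ℝ)..T, (1 - β) ^ α * c ^ α * |s| ^ (p * α))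
        = ∫ s in (0:ℝ)..T, (1 - β) ^ α * c ^ α * s ^ (p - 1) := by
      apply intervalIntegral.integral_congr
      intro s hs
      rw [uIcc_of_le hT0] at hs
      simp only [abs_of_nonneg hs.1, hpa]
    rw [h1, intervalIntegral.integral_const_mul, integral_rpow (Or.inl (by linarith)),
      sub_add_cancel, Real.zero_rpow hp0.ne', sub_zero]
    calc _ = (1 - β) ^ α * (c ^ α * (1 / p)) * T ^ p := by ring
      _ = _ := by rw [hca]
  have hbe : 0 ≤ β - η := by
    have : (1 - β) ^ (1:ℝ) ≤ (1 - β) ^ α :=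
      Real.rpow_le_rpow_of_exponent_ge h1b (by linarith) ha1.le
    rw [Real.rpow_one] at this
    linarith
  have hq : (1 - β) ^ α = (1 - β) + 2 * (β - η) := by linarith
  have hw' := hpos T ⟨hTpos, by linarith⟩
  have hXT := hXeq T hT0
  rw [hint] at hXT
  rw [hval, hq] at hle
  rw [hctil] at hw'
  have h5 : 0 ≤ (β - η) * c * T ^ p := by
    have := Real.rpow_nonneg hT0 p
    positivity
  nlinarith


end Stmt16
end
end
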